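/- Let h > 0 and β > 0 be arbitrary, and let m^+ ∈ (0,1) be the largest solution of z = tanh(βz + h). Set r² = β(1−(m^+)²)² / (4 − 4β(1−(m^+)²)). Fix 0 < δ < 1/6, let ξ̃ be a real random variable with the Gaussian density of mean 0 and variance r², set ξ_N = ξ̃ 1{|ξ̃| ≤ N^δ}, and define ν_N(σ) = E[∏_{i=1}^N ((1 + σ_i m^+)/2 + σ_i ξ_N/√N)] for σ ∈ {−1,+1}^N. Then H(μ_N | ν_N) → 0 and H(ν_N | μ_N) → 0 as N → ∞. -/

import Mathlib

/-!
Write `m = mp`, `θ = β m + h`, so that `m = tanh θ`, and let `p` be the product measure of mean `m`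
and `W = N^{-1/2} ∑ (σ_i - m)`. Completing the square (`boltzmann_eq`) shows that `μ_N` is exactly
`p · exp (β W² / 2)` up to normalization, while `ν_N = p · V` with `V` the `γ`-average of the
densities `dens` of product measures of mean `m + 2 τ / √N`, `γ` the Gaussian law and `τ` its
truncation at `M = N^δ`.

On the typical set `|W| ≤ M`, a second-order expansion (`dens_expansion`) gives
`log dens = 2 W τ / (1 - m²) - 2 τ² / (1 - m²) + O(M³ / √N)`, and the error vanishes because
`δ < 1/6`. The value of `r²` makes the Gaussian average of the main term equal to
`C₁ exp (β W² / 2)`, and truncation only costs `O(exp (-M))`; hence `log (μ_N / ν_N)` is constant up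
to `o(1)` on the typical set (`log_mix_typical`). The constant need not be computed: as both measures
have total mass one, it tends to zero once the typical set has mass close to one under both.

Off the typical set `|log (μ_N / ν_N)| = O(N)`, so stretched-exponential bounds on the mass are
enough. For `ν_N` this is a Chernoff bound (`sum_prodW_mix_exp`). For `μ_N` it rests on the fact that a
centred spin of mean `tanh θ` is sub-Gaussian with variance proxy `m / θ` (`spin_mgf`), a consequence
of the monotonicity of `tanh u / u`. Since `θ / m = β + h / m > β`, the moment
`E_p exp ((β + h / m) W² / 2)` grows at most linearly in `N` (`sum_prodW_exp_sq`), which leaves a gain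
`exp (-h W² / (2 m))` beyond the tilt `exp (β W² / 2)`.
-/

open Filter Real MeasureTheory

/-- Relative entropy (Kullback–Leibler divergence) between two probability mass
functions on a finite set. -/
noncomputable def relEnt {α : Type*} [Fintype α] (rho pion : α → ℝ) : ℝ :=
  ∑ x, rho x * Real.log (rho x / pion x)

/-- The spin value `±1` encoded by a Boolean. -/
noncomputable def sp (b : Bool) : ℝ := if b then 1 else -1

lemma sp_sq (b : Bool) : sp b ^ 2 = 1 := by cases b <;> simp [sp]

lemma sp_cases (b : Bool) : sp b = 1 ∨ sp b = -1 := by cases b <;> simp [sp]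

/-! ### The sub-Gaussian bound for a single biased spin -/

lemma hasDerivAt_tanh' (x : ℝ) : HasDerivAt Real.tanh (1 / Real.cosh x ^ 2) x := by
  have h := (Real.hasDerivAt_sinh x).div (Real.hasDerivAt_cosh x) (Real.cosh_pos x).ne'
  have h1 : Real.tanh = Real.sinh / Real.cosh := by
    funext y; simp [Real.tanh_eq_sinh_div_cosh]
  rw [h1]
  refine h.congr_deriv ?_
  rw [← Real.cosh_sq_sub_sinh_sq x]; ring

lemma concaveOn_tanh : ConcaveOn ℝ (Set.Ici 0) Real.tanh := by
  have hd : deriv Real.tanh = fun x => 1 / Real.cosh x ^ 2 := by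
    funext x; exact (hasDerivAt_tanh' x).deriv
  refine AntitoneOn.concaveOn_of_deriv (convex_Ici 0)
    (fun x _ => (hasDerivAt_tanh' x).continuousAt.continuousWithinAt)
    (fun x _ => (hasDerivAt_tanh' x).differentiableAt.differentiableWithinAt) ?_
  rw [hd, interior_Ici]
  intro x hx y hy hxy
  have hx0 : (0 : ℝ) < x := hx
  have : Real.cosh x ≤ Real.cosh y := by
    rw [Real.cosh_le_cosh, abs_of_pos hx0, abs_of_pos (hx0.trans_le hxy)]; exact hxy
  have := Real.cosh_pos x
  simp only
  gcongr

/-- The map `u ↦ tanh u / u` is nonincreasing on the positive half-line. -/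
lemma tanh_ratio {u v : ℝ} (hu : 0 ≤ u) (huv : u ≤ v) (hv : 0 < v) :
    u * Real.tanh v ≤ v * Real.tanh u := by
  have h01 : 0 ≤ 1 - u / v := by rw [sub_nonneg, div_le_one hv]; exact huv
  have h := concaveOn_tanh.2 (Set.mem_Ici.2 le_rfl) (Set.mem_Ici.2 hv.le) h01
    (show 0 ≤ u / v by positivity) (by ring)
  simp only [smul_eq_mul, mul_zero, zero_add, Real.tanh_zero, div_mul_cancel₀ _ hv.ne'] at h
  calc u * Real.tanh v = v * (u / v * Real.tanh v) := by field_simp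
    _ ≤ v * Real.tanh u := by gcongr

/-- Comparison of `log cosh` with the even parabola tangent to it at `±θ`. -/
lemma log_cosh_le {θ : ℝ} (hθ : 0 < θ) (u : ℝ) :
    Real.log (Real.cosh u) - Real.tanh θ / (2 * θ) * u ^ 2 ≤
      Real.log (Real.cosh θ) - Real.tanh θ / (2 * θ) * θ ^ 2 := by
  set F : ℝ → ℝ := fun u => Real.log (Real.cosh u) - Real.tanh θ / (2 * θ) * u ^ 2 with hF
  have hder : ∀ x, HasDerivAt F (Real.tanh x - Real.tanh θ / θ * x) x := by
    intro x
    have h := ((Real.hasDerivAt_cosh x).log (Real.cosh_pos x).ne').sub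
      ((hasDerivAt_pow 2 x).const_mul (Real.tanh θ / (2 * θ)))
    refine h.congr_deriv ?_
    rw [Real.tanh_eq_sinh_div_cosh x]
    field_simp
    ring
  have hcont : Continuous F := continuous_iff_continuousAt.2 fun x => (hder x).continuousAt
  have hmono : MonotoneOn F (Set.Icc 0 θ) := by
    refine monotoneOn_of_deriv_nonneg (convex_Icc 0 θ) hcont.continuousOn
      (fun x _ => (hder x).differentiableAt.differentiableWithinAt) ?_
    intro x hx
    rw [interior_Icc] at hx
    rw [(hder x).deriv, sub_nonneg]
    have := tanh_ratio hx.1.le hx.2.le hθ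
    rw [div_mul_eq_mul_div, div_le_iff₀ hθ]; linarith
  have hanti : AntitoneOn F (Set.Ici θ) := by
    refine antitoneOn_of_deriv_nonpos (convex_Ici θ) hcont.continuousOn
      (fun x _ => (hder x).differentiableAt.differentiableWithinAt) ?_
    intro x hx
    rw [interior_Ici] at hx
    rw [(hder x).deriv, sub_nonpos]
    have := tanh_ratio hθ.le (le_of_lt hx) (hθ.trans hx)
    rw [div_mul_eq_mul_div, le_div_iff₀ hθ]; linarith
  have habs : F u = F |u| := by simp [hF, Real.cosh_abs]
  change F u ≤ F θ
  rw [habs]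
  rcases le_total |u| θ with h | h
  · exact hmono ⟨abs_nonneg u, h⟩ ⟨hθ.le, le_rfl⟩ h
  · exact hanti (Set.mem_Ici.2 le_rfl) h h

lemma spin_weight {m θ : ℝ} (hm : m = Real.tanh θ) (b : Bool) :
    (1 + sp b * m) / 2 = Real.exp (θ * sp b) / (2 * Real.cosh θ) := by
  have hc := Real.cosh_pos θ
  rw [hm, Real.tanh_eq_sinh_div_cosh]
  cases b
  · have : Real.exp (θ * sp false) = Real.cosh θ - Real.sinh θ := by
      rw [Real.cosh_sub_sinh]; simp [sp]
    rw [this]; simp only [sp]; field_simp; simp only [Bool.false_eq_true, if_false]; ring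
  · have : Real.exp (θ * sp true) = Real.cosh θ + Real.sinh θ := by
      rw [Real.cosh_add_sinh]; simp [sp]
    rw [this]; simp only [sp]; field_simp; simp

/-- A spin of mean `m = tanh θ`, once centred, is sub-Gaussian with variance proxy `m / θ`. -/
lemma spin_mgf {m θ : ℝ} (hθ : 0 < θ) (hm : m = Real.tanh θ) (x : ℝ) :
    ∑ b : Bool, (1 + sp b * m) / 2 * Real.exp (x * (sp b - m)) ≤
      Real.exp (m / θ * x ^ 2 / 2) := by
  have hc := Real.cosh_pos θ
  have h1 : ∑ b : Bool, (1 + sp b * m) / 2 * Real.exp (x * (sp b - m)) =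
      Real.exp (Real.log (Real.cosh (θ + x)) - Real.log (Real.cosh θ) - x * m) := by
    rw [Real.exp_sub, Real.exp_sub, Real.exp_log (Real.cosh_pos _), Real.exp_log hc]
    simp only [Fintype.sum_bool, spin_weight hm, mul_sub, Real.exp_sub]
    rw [Real.cosh_eq (θ + x)]
    simp only [sp, if_true, mul_one, mul_neg, neg_add, Real.exp_add, Bool.false_eq_true, if_false]
    field_simp
  rw [h1, Real.exp_le_exp]
  have h2 := log_cosh_le hθ (θ + x)
  rw [← hm] at h2
  have h3 : m / (2 * θ) * (θ + x) ^ 2 - m / (2 * θ) * θ ^ 2 = x * m + m / θ * x ^ 2 / 2 := by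
    field_simp; ring
  linarith

/-- At a positive solution of the mean-field equation with positive field the slope of
`z ↦ tanh (β z + h)` is below one. -/
lemma slope_lt_one {β h m : ℝ} (hh : 0 < h) (hm0 : 0 < m) (hm1 : m < 1)
    (hβ : 0 < β) (hm : m = Real.tanh (β * m + h)) : β * (1 - m ^ 2) < 1 := by
  set θ := β * m + h with hθd
  have hθ : 0 < θ := by positivity
  have hc := Real.cosh_pos θ
  have h1 : θ * (1 - m ^ 2) ≤ m := by
    have e : 1 - m ^ 2 = 1 / Real.cosh θ ^ 2 := by
      rw [hm, Real.tanh_eq_sinh_div_cosh]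
      field_simp
      linarith [Real.cosh_sq_sub_sinh_sq θ]
    rw [e]
    have hm' : m = Real.sinh θ / Real.cosh θ := by rw [← Real.tanh_eq_sinh_div_cosh]; exact hm
    rw [hm', mul_one_div, div_le_div_iff₀ (by positivity) hc]
    have h2 : θ ≤ Real.sinh θ := Real.self_le_sinh_iff.2 hθ.le
    have h3 := Real.one_le_cosh θ
    nlinarith [mul_le_mul_of_nonneg_right h2 hc.le,
      mul_le_mul_of_nonneg_left h3 (mul_nonneg (hθ.le.trans h2) hc.le)]
  have ha : 0 < 1 - m ^ 2 := by nlinarith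
  have h4 : β * m * (1 - m ^ 2) < m := by
    have := mul_pos hh ha
    nlinarith
  nlinarith

/-! ### From density ratios to relative entropy -/

lemma neg_two_mul_le_log {η : ℝ} (h0 : 0 ≤ η) (h1 : η ≤ 1 / 2) : -(2 * η) ≤ Real.log (1 - η) := by
  rw [Real.le_log_iff_exp_le (by linarith), Real.exp_neg, inv_le_comm₀ (Real.exp_pos _) (by linarith)]
  have h2 : (1 - η)⁻¹ ≤ 2 * η + 1 := by
    rw [inv_le_iff_one_le_mul₀ (by linarith)]; nlinarith
  exact h2.trans (Real.add_one_le_exp _)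

/-- If the log-ratio `log (p / q)` of two probability vectors is at most `l + ε` on a set carrying
almost all of the mass of `p`, then `l` cannot be much below zero. Applied also with `p` and `q`
exchanged, this identifies the normalizing constant of the ratio without computing it. -/
lemma log_const_ge {α : Type*} [Fintype α] [DecidableEq α] (p q : α → ℝ)
    (hp : ∀ x, 0 < p x) (hq : ∀ x, 0 < q x) (sp1 : ∑ x, p x = 1) (sq1 : ∑ x, q x = 1)
    (T : Finset α) (l ε η : ℝ) (hT : ∀ x ∈ T, Real.log (p x / q x) ≤ l + ε)
    (hηp : ∑ x ∈ Tᶜ, p x ≤ η) (hη : η ≤ 1 / 2) : -(2 * η) - ε ≤ l := by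
  have h0 : 0 ≤ η := (Finset.sum_nonneg fun x _ => (hp x).le).trans hηp
  have hle : ∀ x ∈ T, p x ≤ Real.exp (l + ε) * q x := by
    intro x hx
    have := hT x hx
    rw [Real.log_le_iff_le_exp (div_pos (hp x) (hq x)), div_le_iff₀ (hq x)] at this
    exact this
  have h1 : 1 - η ≤ Real.exp (l + ε) := by
    calc 1 - η ≤ ∑ x ∈ T, p x := by
          have := Finset.sum_add_sum_compl T p
          linarith
      _ ≤ ∑ x ∈ T, Real.exp (l + ε) * q x := Finset.sum_le_sum hle
      _ = Real.exp (l + ε) * ∑ x ∈ T, q x := by rw [Finset.mul_sum]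
      _ ≤ Real.exp (l + ε) * 1 := by
          gcongr
          rw [← sq1]
          exact Finset.sum_le_sum_of_subset_of_nonneg (Finset.subset_univ T)
            fun x _ _ => (hq x).le
      _ = _ := mul_one _
  have h2 := Real.log_le_log (by linarith) h1
  rw [Real.log_exp] at h2
  linarith [neg_two_mul_le_log h0 hη]

/-- Two probability vectors whose log-ratio is nearly constant on a set `T` of nearly full mass, and at
most `K` in absolute value elsewhere, have small relative entropy. -/
lemma relEnt_bound {α : Type*} [Fintype α] [DecidableEq α] (p q : α → ℝ)
    (hp : ∀ x, 0 < p x) (hq : ∀ x, 0 < q x) (sp1 : ∑ x, p x = 1) (sq1 : ∑ x, q x = 1)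
    (T : Finset α) (l ε η K : ℝ) (hT : ∀ x ∈ T, |Real.log (p x / q x) - l| ≤ ε)
    (hK0 : 0 ≤ K) (hε0 : 0 ≤ ε)
    (hK : ∀ x, |Real.log (p x / q x)| ≤ K)
    (hηp : ∑ x ∈ Tᶜ, p x ≤ η) (hηq : ∑ x ∈ Tᶜ, q x ≤ η) (hη : η ≤ 1 / 2) :
    |relEnt p q| ≤ 2 * ε + 2 * η + K * η := by
  have hinv : ∀ x, Real.log (q x / p x) = - Real.log (p x / q x) := by
    intro x; rw [← Real.log_inv, inv_div]
  have h0 : 0 ≤ η := (Finset.sum_nonneg fun x _ => (hp x).le).trans hηp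
  have hl1 : -(2 * η) - ε ≤ l := log_const_ge p q hp hq sp1 sq1 T l ε η
    (fun x hx => by linarith [(abs_le.1 (hT x hx)).2]) hηp hη
  have hl2 : -(2 * η) - ε ≤ -l := log_const_ge q p hq hp sq1 sp1 T (-l) ε η
    (fun x hx => by rw [hinv]; linarith [(abs_le.1 (hT x hx)).1]) hηq hη
  have hTle : ∑ x ∈ T, p x ≤ 1 := by
    rw [← sp1]
    exact Finset.sum_le_sum_of_subset_of_nonneg (Finset.subset_univ T) fun x _ _ => (hp x).le
  have e1 : |∑ x ∈ T, p x * Real.log (p x / q x)| ≤ 2 * ε + 2 * η := by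
    calc _ ≤ ∑ x ∈ T, |p x * Real.log (p x / q x)| := Finset.abs_sum_le_sum_abs _ _
      _ ≤ ∑ x ∈ T, p x * (2 * ε + 2 * η) := by
          refine Finset.sum_le_sum fun x hx => ?_
          rw [abs_mul, abs_of_pos (hp x)]
          refine mul_le_mul_of_nonneg_left ?_ (hp x).le
          have := abs_le.1 (hT x hx)
          rw [abs_le]; constructor <;> linarith
      _ = (∑ x ∈ T, p x) * (2 * ε + 2 * η) := by rw [Finset.sum_mul]
      _ ≤ 1 * (2 * ε + 2 * η) := by gcongr
      _ = _ := one_mul _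
  have e2 : |∑ x ∈ Tᶜ, p x * Real.log (p x / q x)| ≤ K * η := by
    calc _ ≤ ∑ x ∈ Tᶜ, |p x * Real.log (p x / q x)| := Finset.abs_sum_le_sum_abs _ _
      _ ≤ ∑ x ∈ Tᶜ, p x * K := by
          refine Finset.sum_le_sum fun x hx => ?_
          rw [abs_mul, abs_of_pos (hp x)]
          exact mul_le_mul_of_nonneg_left (hK x) (hp x).le
      _ = K * (∑ x ∈ Tᶜ, p x) := by rw [← Finset.sum_mul, mul_comm]
      _ ≤ K * η := by gcongr
  unfold relEnt
  rw [← Finset.sum_add_sum_compl T]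
  exact (abs_add_le _ _).trans (add_le_add e1 e2)

/-! ### The product measure and the rescaled magnetization -/

/-- The product measure on `{±1}^N` with mean magnetization `m`. -/
noncomputable def prodW (m : ℝ) (N : ℕ) (σ : Fin N → Bool) : ℝ := ∏ i, (1 + sp (σ i) * m) / 2

/-- The centred magnetization `N^{-1/2} ∑ (σ_i - m)`. -/
noncomputable def mag (m : ℝ) (N : ℕ) (σ : Fin N → Bool) : ℝ := (∑ i, (sp (σ i) - m)) / √N

lemma prodW_pos {m : ℝ} (hm0 : 0 < m) (hm1 : m < 1) (N : ℕ) (σ : Fin N → Bool) :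
    0 < prodW m N σ := by
  refine Finset.prod_pos fun i _ => ?_
  rcases sp_cases (σ i) with h | h <;> rw [h] <;> linarith

lemma sum_prodW (m : ℝ) (N : ℕ) : ∑ σ, prodW m N σ = 1 := by
  unfold prodW
  rw [← Fintype.sum_pow (fun b => (1 + sp b * m) / 2) N]
  simp [sp]
  ring_nf

lemma abs_mag_le {m : ℝ} (hm0 : 0 < m) (hm1 : m < 1) {N : ℕ} (hN : 0 < N) (σ : Fin N → Bool) :
    |mag m N σ| ≤ 2 * √N := by
  have hs : 0 < √(N : ℝ) := Real.sqrt_pos.2 (by exact_mod_cast hN)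
  unfold mag
  rw [abs_div, abs_of_pos hs, div_le_iff₀ hs, mul_assoc, Real.mul_self_sqrt (by positivity)]
  calc _ ≤ ∑ i, |sp (σ i) - m| := Finset.abs_sum_le_sum_abs _ _
    _ ≤ ∑ i : Fin N, (2 : ℝ) := by
        refine Finset.sum_le_sum fun i _ => ?_
        rcases sp_cases (σ i) with h | h <;> rw [h, abs_le] <;> constructor <;> linarith
    _ = 2 * N := by simp [mul_comm]

/-- Up to a constant, the Boltzmann weight is the product weight tilted by `exp (β W² / 2)`. -/
lemma boltzmann_eq {β h m : ℝ} (hm : m = Real.tanh (β * m + h)) {N : ℕ} (hN : 0 < N)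
    (σ : Fin N → Bool) :
    Real.exp (β / (2 * N) * (∑ i, ∑ j, sp (σ i) * sp (σ j)) + h * ∑ i, sp (σ i)) =
      ((2 * Real.cosh (β * m + h)) ^ N * Real.exp (-(β * N * m ^ 2 / 2))) *
        (prodW m N σ * Real.exp (β * mag m N σ ^ 2 / 2)) := by
  have hc := Real.cosh_pos (β * m + h)
  have hN' : (0 : ℝ) < N := by exact_mod_cast hN
  have e1 : ∑ i, ∑ j, sp (σ i) * sp (σ j) = (∑ i, sp (σ i)) ^ 2 := by
    rw [sq, Finset.sum_mul_sum]
  have e2 : prodW m N σ =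
      Real.exp ((β * m + h) * ∑ i, sp (σ i)) / (2 * Real.cosh (β * m + h)) ^ N := by
    unfold prodW
    simp only [spin_weight hm]
    rw [Finset.prod_div_distrib, ← Real.exp_sum, Finset.mul_sum]
    simp
  have e3 : mag m N σ ^ 2 = ((∑ i, sp (σ i)) - N * m) ^ 2 / N := by
    unfold mag
    rw [div_pow, Real.sq_sqrt hN'.le, Finset.sum_sub_distrib]
    simp
  rw [e1, e2, e3]
  set S := ∑ i, sp (σ i)
  rw [show ∀ A B C D : ℝ, A * B * (C / A * D) = (A / A) * (B * C * D) by intros; ring,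
    div_self (by positivity), one_mul, ← Real.exp_add, ← Real.exp_add]
  congr 1
  field_simp
  ring

/-- Under the product measure, `W` is sub-Gaussian with variance proxy `m / θ`. -/
lemma sum_prodW_exp {m θ : ℝ} (hm0 : 0 < m) (hm1 : m < 1) (hθ : 0 < θ) (hm : m = Real.tanh θ)
    {N : ℕ} (hN : 0 < N) (x : ℝ) :
    ∑ σ, prodW m N σ * Real.exp (x * mag m N σ) ≤ Real.exp (m / θ * x ^ 2 / 2) := by
  have hN' : (0 : ℝ) < N := by exact_mod_cast hN
  have hs : 0 < √(N : ℝ) := Real.sqrt_pos.2 hN'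
  have e : ∀ σ : Fin N → Bool, prodW m N σ * Real.exp (x * mag m N σ) =
      ∏ i, ((1 + sp (σ i) * m) / 2 * Real.exp (x / √N * (sp (σ i) - m))) := by
    intro σ
    unfold prodW mag
    rw [Finset.prod_mul_distrib, ← Real.exp_sum, ← Finset.mul_sum]
    congr 2; ring
  simp only [e]
  rw [← Fintype.sum_pow (fun b => (1 + sp b * m) / 2 * Real.exp (x / √N * (sp b - m))) N]
  have hnn : 0 ≤ ∑ b : Bool, (1 + sp b * m) / 2 * Real.exp (x / √N * (sp b - m)) := by
    refine Finset.sum_nonneg fun b _ => mul_nonneg ?_ (Real.exp_pos _).le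
    rcases sp_cases b with h | h <;> rw [h] <;> linarith
  refine (pow_le_pow_left₀ hnn (spin_mgf hθ hm _) N).trans (le_of_eq ?_)
  rw [← Real.exp_nat_mul, div_pow, Real.sq_sqrt hN'.le]
  congr 1
  field_simp

/-- The squared-exponential moment at the critical rate `1 / v = θ / m` is at most `N + 1`: bound
`exp (W² / (2v))` by the sum of `exp ((w W - w² / 2) / v)` over the `N + 1` possible values `w`
of `W`. -/
lemma sum_prodW_exp_sq {m θ : ℝ} (hm0 : 0 < m) (hm1 : m < 1) (hθ : 0 < θ) (hm : m = Real.tanh θ)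
    {N : ℕ} (hN : 0 < N) :
    ∑ σ, prodW m N σ * Real.exp (θ / m * mag m N σ ^ 2 / 2) ≤ N + 1 := by
  set w : ℕ → ℝ := fun k => (2 * k - N - N * m) / √N with hw
  have hval : ∀ σ : Fin N → Bool, ∃ k ∈ Finset.range (N + 1), mag m N σ = w k := by
    intro σ
    refine ⟨(Finset.univ.filter fun i => σ i = true).card, ?_, ?_⟩
    · rw [Finset.mem_range, Nat.lt_succ_iff]
      exact (Finset.card_filter_le _ _).trans (by simp)
    · simp only [hw, mag]
      congr 1
      have : ∀ i, sp (σ i) - m = 2 * (if σ i = true then (1 : ℝ) else 0) - (1 + m) := by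
        intro i; cases σ i <;> simp [sp] <;> ring
      simp only [this]
      rw [Finset.sum_sub_distrib, ← Finset.mul_sum, Finset.sum_boole]
      simp
      ring
  have hpt : ∀ σ : Fin N → Bool, Real.exp (θ / m * mag m N σ ^ 2 / 2) ≤
      ∑ k ∈ Finset.range (N + 1),
        Real.exp (θ / m * w k * mag m N σ) * Real.exp (-(θ / m * w k ^ 2 / 2)) := by
    intro σ
    obtain ⟨k, hk, hkw⟩ := hval σ
    refine le_trans (le_of_eq ?_) (Finset.single_le_sum
      (f := fun k => Real.exp (θ / m * w k * mag m N σ) * Real.exp (-(θ / m * w k ^ 2 / 2)))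
      (fun j _ => by positivity) hk)
    rw [← Real.exp_add, hkw]
    congr 1; ring
  calc _ ≤ ∑ σ, prodW m N σ * ∑ k ∈ Finset.range (N + 1),
        Real.exp (θ / m * w k * mag m N σ) * Real.exp (-(θ / m * w k ^ 2 / 2)) :=
        Finset.sum_le_sum fun σ _ =>
          mul_le_mul_of_nonneg_left (hpt σ) (prodW_pos hm0 hm1 N σ).le
    _ = ∑ k ∈ Finset.range (N + 1), (∑ σ, prodW m N σ * Real.exp (θ / m * w k * mag m N σ)) *
          Real.exp (-(θ / m * w k ^ 2 / 2)) := by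
        simp only [Finset.mul_sum, Finset.sum_mul]
        rw [Finset.sum_comm]
        simp only [mul_assoc]
    _ ≤ ∑ k ∈ Finset.range (N + 1), (1 : ℝ) := by
        refine Finset.sum_le_sum fun k _ => ?_
        refine (mul_le_mul_of_nonneg_right (sum_prodW_exp hm0 hm1 hθ hm hN _)
          (Real.exp_pos _).le).trans (le_of_eq ?_)
        rw [← Real.exp_add, Real.exp_eq_one_iff]
        field_simp
        ring
    _ = N + 1 := by simp

/-! ### Mixtures of product measures with perturbed mean -/

/-- Truncation of `t` at level `M`, with value `0` beyond that level. -/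
noncomputable def tr (M t : ℝ) : ℝ := if |t| ≤ M then t else 0

/-- Relative change of the weight of a spin when the mean moves from `m` to `m + 2 τ / √N`. -/
noncomputable def dev (m : ℝ) (N : ℕ) (τ : ℝ) (b : Bool) : ℝ :=
  2 * (sp b - m) * τ / ((1 - m ^ 2) * √N)

/-- Density of the product measure of mean `m + 2 τ / √N` relative to the one of mean `m`. -/
noncomputable def dens (m : ℝ) (N : ℕ) (τ : ℝ) (σ : Fin N → Bool) : ℝ := ∏ i, (1 + dev m N τ (σ i))

lemma measurable_tr (M : ℝ) : Measurable (tr M) := by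
  unfold tr
  exact Measurable.ite (measurableSet_le (by fun_prop) (by fun_prop)) measurable_id measurable_const

lemma abs_tr_le {M : ℝ} (hM : 0 ≤ M) (t : ℝ) : |tr M t| ≤ M := by
  unfold tr; split_ifs with h
  · exact h
  · simpa using hM

lemma factor_eq {m : ℝ} (hm0 : 0 < m) (hm1 : m < 1) {N : ℕ} (hN : 0 < N) (τ : ℝ) (b : Bool) :
    (1 + sp b * m) / 2 + sp b * τ / √N = (1 + sp b * m) / 2 * (1 + dev m N τ b) := by
  have hs : 0 < √(N : ℝ) := Real.sqrt_pos.2 (by exact_mod_cast hN)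
  have ha : 0 < 1 - m ^ 2 := by nlinarith
  unfold dev
  rcases sp_cases b with h | h <;> rw [h] <;> field_simp <;> ring

lemma prod_factor_eq {m : ℝ} (hm0 : 0 < m) (hm1 : m < 1) {N : ℕ} (hN : 0 < N) (τ : ℝ)
    (σ : Fin N → Bool) :
    ∏ i, ((1 + sp (σ i) * m) / 2 + sp (σ i) * τ / √N) = prodW m N σ * dens m N τ σ := by
  simp only [factor_eq hm0 hm1 hN]
  rw [Finset.prod_mul_distrib]; rfl

lemma abs_sp_sub_le {m : ℝ} (hm0 : 0 < m) (hm1 : m < 1) (b : Bool) : |sp b - m| ≤ 2 := by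
  rcases sp_cases b with h | h <;> rw [h, abs_le] <;> constructor <;> linarith

lemma abs_dev_le {m : ℝ} (hm0 : 0 < m) (hm1 : m < 1) {N : ℕ} (hN : 0 < N) {τ M : ℝ}
    (hτ : |τ| ≤ M) (b : Bool) : |dev m N τ b| ≤ 4 * M / ((1 - m ^ 2) * √N) := by
  have hs : 0 < √(N : ℝ) := Real.sqrt_pos.2 (by exact_mod_cast hN)
  have ha : 0 < 1 - m ^ 2 := by nlinarith
  unfold dev
  rw [abs_div, abs_mul, abs_mul, abs_of_pos (mul_pos ha hs), abs_of_pos (zero_lt_two' ℝ)]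
  gcongr
  have := abs_sp_sub_le hm0 hm1 b
  nlinarith

lemma dens_bounds {m : ℝ} (hm0 : 0 < m) (hm1 : m < 1) {N : ℕ} (hN : 0 < N) {τ M : ℝ}
    (hτ : |τ| ≤ M) (hsm : 4 * M / ((1 - m ^ 2) * √N) ≤ 1 / 2) (σ : Fin N → Bool) :
    (1 / 2) ^ N ≤ dens m N τ σ ∧ dens m N τ σ ≤ 2 ^ N := by
  have hx : ∀ i, |dev m N τ (σ i)| ≤ 1 / 2 := fun i => (abs_dev_le hm0 hm1 hN hτ _).trans hsm
  have hl : ∀ i, 1 / 2 ≤ 1 + dev m N τ (σ i) := fun i => by linarith [(abs_le.1 (hx i)).1]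
  have hu : ∀ i, 1 + dev m N τ (σ i) ≤ 2 := fun i => by linarith [(abs_le.1 (hx i)).2]
  constructor
  · calc ((1 : ℝ) / 2) ^ N = ∏ i : Fin N, ((1 : ℝ) / 2) := by simp
      _ ≤ _ := Finset.prod_le_prod (fun _ _ => by norm_num) fun i _ => hl i
  · calc dens m N τ σ ≤ ∏ i : Fin N, (2 : ℝ) :=
          Finset.prod_le_prod (fun i _ => by linarith [hl i]) fun i _ => hu i
      _ = _ := by simp

lemma abs_log_taylor {x : ℝ} (hx : |x| ≤ 1 / 2) :
    |Real.log (1 + x) - (x - x ^ 2 / 2)| ≤ 2 * |x| ^ 3 := by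
  have h := Real.abs_log_sub_add_sum_range_le (x := -x) (by rw [abs_neg]; linarith) 2
  simp only [Finset.sum_range_succ, Finset.sum_range_zero, abs_neg, sub_neg_eq_add] at h
  have e : Real.log (1 + x) - (x - x ^ 2 / 2) =
      0 + (-x) ^ (0 + 1) / (((0 : ℕ) : ℝ) + 1) + (-x) ^ (1 + 1) / (((1 : ℕ) : ℝ) + 1) +
        Real.log (1 + x) := by
    push_cast; ring
  rw [e]
  refine h.trans ?_
  rw [div_le_iff₀ (by linarith)]
  have h3 := mul_le_mul_of_nonneg_left hx (pow_nonneg (abs_nonneg x) 3)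
  norm_num
  linarith

/-- Second-order expansion of the log-density, uniform over `|τ|, |W| ≤ M`. -/
lemma dens_expansion {m : ℝ} (hm0 : 0 < m) (hm1 : m < 1) {N : ℕ} (hN : 0 < N) {τ M : ℝ}
    (hM : 0 ≤ M) (hτ : |τ| ≤ M) (hsm : 4 * M / ((1 - m ^ 2) * √N) ≤ 1 / 2) (σ : Fin N → Bool)
    (hW : |mag m N σ| ≤ M) {ε : ℝ}
    (hε : ε = (4 * m / (1 - m ^ 2) ^ 2 + 128 / (1 - m ^ 2) ^ 3) * (M ^ 3 / √N)) :
    Real.exp (-ε) * Real.exp (2 * mag m N σ * τ / (1 - m ^ 2) - 2 * τ ^ 2 / (1 - m ^ 2)) ≤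
        dens m N τ σ ∧
      dens m N τ σ ≤
        Real.exp ε * Real.exp (2 * mag m N σ * τ / (1 - m ^ 2) - 2 * τ ^ 2 / (1 - m ^ 2)) := by
  have hN' : (0 : ℝ) < N := by exact_mod_cast hN
  have hs : 0 < √(N : ℝ) := Real.sqrt_pos.2 hN'
  have hss : √(N : ℝ) ^ 2 = N := Real.sq_sqrt hN'.le
  have ha : 0 < 1 - m ^ 2 := by nlinarith
  set a := 1 - m ^ 2 with had
  set W := mag m N σ with hWd
  have hx : ∀ i, |dev m N τ (σ i)| ≤ 1 / 2 := fun i => (abs_dev_le hm0 hm1 hN hτ _).trans hsm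
  have hpos : ∀ i, 0 < 1 + dev m N τ (σ i) := fun i => by linarith [(abs_le.1 (hx i)).1]
  have hsumW : ∑ i, (sp (σ i) - m) = √N * W := by
    rw [hWd, mag]; field_simp
  have hdens : dens m N τ σ = Real.exp (∑ i, Real.log (1 + dev m N τ (σ i))) := by
    rw [Real.exp_sum]
    exact Finset.prod_congr rfl fun i _ => (Real.exp_log (hpos i)).symm
  have h1 : ∑ i, dev m N τ (σ i) = 2 * W * τ / a := by
    have : ∀ i, dev m N τ (σ i) = 2 * τ / (a * √N) * (sp (σ i) - m) := by
      intro i; unfold dev; ring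
    simp only [this]
    rw [← Finset.mul_sum, hsumW]
    field_simp
  have h2 : ∑ i, dev m N τ (σ i) ^ 2 / 2 = 2 * τ ^ 2 / a - 4 * m * τ ^ 2 * W / (a ^ 2 * √N) := by
    have : ∀ i, dev m N τ (σ i) ^ 2 / 2 =
        2 * τ ^ 2 / (a ^ 2 * N) * a - 4 * τ ^ 2 * m / (a ^ 2 * N) * (sp (σ i) - m) := by
      intro i
      have e := sp_sq (σ i)
      have e' : (sp (σ i) - m) ^ 2 = a - 2 * m * (sp (σ i) - m) := by rw [had]; linear_combination e
      unfold dev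
      rw [div_pow, mul_pow, mul_pow, e', mul_pow, hss]
      ring
    simp only [this]
    rw [Finset.sum_sub_distrib, ← Finset.mul_sum, ← Finset.mul_sum, hsumW]
    simp only [Finset.sum_const, Finset.card_univ, Fintype.card_fin, nsmul_eq_mul]
    clear_value W a
    generalize √(N : ℝ) = r at hs hss ⊢
    rw [← hss]
    field_simp
  have h3 : |∑ i, Real.log (1 + dev m N τ (σ i)) - (2 * W * τ / a - 2 * τ ^ 2 / a)| ≤ ε := by
    have e1 : ∑ i, Real.log (1 + dev m N τ (σ i)) - (2 * W * τ / a - 2 * τ ^ 2 / a) =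
        ∑ i, (Real.log (1 + dev m N τ (σ i)) - (dev m N τ (σ i) - dev m N τ (σ i) ^ 2 / 2)) +
          4 * m * τ ^ 2 * W / (a ^ 2 * √N) := by
      rw [Finset.sum_sub_distrib, Finset.sum_sub_distrib, h1, h2]; ring
    rw [e1]
    refine (abs_add_le _ _).trans ?_
    have b1 : |∑ i, (Real.log (1 + dev m N τ (σ i)) -
        (dev m N τ (σ i) - dev m N τ (σ i) ^ 2 / 2))| ≤ 128 / a ^ 3 * (M ^ 3 / √N) := by
      calc _ ≤ ∑ i, |Real.log (1 + dev m N τ (σ i)) -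
            (dev m N τ (σ i) - dev m N τ (σ i) ^ 2 / 2)| := Finset.abs_sum_le_sum_abs _ _
        _ ≤ ∑ i : Fin N, 2 * (4 * M / (a * √N)) ^ 3 := by
            refine Finset.sum_le_sum fun i _ => (abs_log_taylor (hx i)).trans ?_
            have := abs_dev_le hm0 hm1 hN hτ (σ i)
            gcongr
        _ = N * (2 * (4 * M / (a * √N)) ^ 3) := by simp
        _ = 128 / a ^ 3 * (M ^ 3 / √N) := by
            nth_rewrite 1 [← hss]
            field_simp
            ring
    have b2 : |4 * m * τ ^ 2 * W / (a ^ 2 * √N)| ≤ 4 * m / a ^ 2 * (M ^ 3 / √N) := by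
      rw [abs_div, abs_mul, abs_mul, abs_of_pos (show 0 < 4 * m by positivity), abs_pow,
        abs_of_pos (show 0 < a ^ 2 * √(N : ℝ) by positivity)]
      calc 4 * m * |τ| ^ 2 * |W| / (a ^ 2 * √N) ≤ 4 * m * M ^ 2 * M / (a ^ 2 * √N) := by gcongr
        _ = _ := by field_simp
    rw [hε]; linarith
  rw [hdens, ← Real.exp_add, ← Real.exp_add, Real.exp_le_exp, Real.exp_le_exp]
  have := abs_le.1 h3
  constructor <;> linarith

lemma measurable_dens (m : ℝ) (N : ℕ) (σ : Fin N → Bool) : Measurable fun τ => dens m N τ σ := by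
  unfold dens dev; fun_prop

lemma integrable_dens {m : ℝ} (hm0 : 0 < m) (hm1 : m < 1) {N : ℕ} (hN : 0 < N) {M : ℝ}
    (hM : 0 ≤ M) (hsm : 4 * M / ((1 - m ^ 2) * √N) ≤ 1 / 2) (γ : Measure ℝ)
    [IsProbabilityMeasure γ] (σ : Fin N → Bool) :
    Integrable (fun t => dens m N (tr M t) σ) γ := by
  refine Integrable.of_bound
    ((measurable_dens m N σ).comp (measurable_tr M)).aestronglyMeasurable (2 ^ N) (ae_of_all _ ?_)
  intro t
  have h := dens_bounds hm0 hm1 hN (abs_tr_le hM t) hsm σ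
  rw [Real.norm_eq_abs, abs_of_nonneg ((by positivity : (0 : ℝ) ≤ (1 / 2) ^ N).trans h.1)]
  exact h.2

/-- Density, relative to the product measure, of the mixture with truncated mixing law `γ`. -/
noncomputable def mix (γ : Measure ℝ) (m : ℝ) (N : ℕ) (M : ℝ) (σ : Fin N → Bool) : ℝ :=
  ∫ t, dens m N (tr M t) σ ∂γ

lemma mix_bounds {m : ℝ} (hm0 : 0 < m) (hm1 : m < 1) {N : ℕ} (hN : 0 < N) {M : ℝ}
    (hM : 0 ≤ M) (hsm : 4 * M / ((1 - m ^ 2) * √N) ≤ 1 / 2) (γ : Measure ℝ)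
    [IsProbabilityMeasure γ] (σ : Fin N → Bool) :
    (1 / 2) ^ N ≤ mix γ m N M σ ∧ mix γ m N M σ ≤ 2 ^ N := by
  have hi := integrable_dens hm0 hm1 hN hM hsm γ σ
  have hb := fun t => dens_bounds hm0 hm1 hN (abs_tr_le hM t) hsm σ
  constructor
  · have := integral_mono (integrable_const _) hi fun t => (hb t).1
    simpa [mix] using this
  · have := integral_mono hi (integrable_const _) fun t => (hb t).2
    simpa [mix] using this

lemma sum_prodW_dens {m : ℝ} (hm0 : 0 < m) (hm1 : m < 1) {N : ℕ} (hN : 0 < N) (τ : ℝ) :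
    ∑ σ, prodW m N σ * dens m N τ σ = 1 := by
  simp only [← prod_factor_eq hm0 hm1 hN]
  rw [← Fintype.sum_pow (fun b => (1 + sp b * m) / 2 + sp b * τ / √N) N]
  simp [sp]
  ring_nf

lemma sum_prodW_mix {m : ℝ} (hm0 : 0 < m) (hm1 : m < 1) {N : ℕ} (hN : 0 < N) {M : ℝ}
    (hM : 0 ≤ M) (hsm : 4 * M / ((1 - m ^ 2) * √N) ≤ 1 / 2) (γ : Measure ℝ)
    [IsProbabilityMeasure γ] :
    ∑ σ, prodW m N σ * mix γ m N M σ = 1 := by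
  unfold mix
  simp only [← integral_const_mul]
  rw [← integral_finsetSum _ fun σ _ => (integrable_dens hm0 hm1 hN hM hsm γ σ).const_mul _]
  simp [sum_prodW_dens hm0 hm1 hN]

/-- Exponential moment of `W` under the product measure of mean `m + 2 τ / √N`; this suffices for a
Chernoff bound on the mixture. -/
lemma sum_prodW_dens_exp {m : ℝ} (hm0 : 0 < m) (hm1 : m < 1) {N : ℕ} (hN : 4 ≤ N) {τ M : ℝ}
    (hτ : |τ| ≤ M) (hsm : 4 * M / ((1 - m ^ 2) * √N) ≤ 1 / 2) {s : ℝ} (hs1 : |s| = 1) :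
    ∑ σ, prodW m N σ * dens m N τ σ * Real.exp (s * mag m N σ) ≤ Real.exp (2 * s * τ + 4) := by
  have hN0 : 0 < N := by omega
  have hN' : (0 : ℝ) < N := by exact_mod_cast hN0
  have hs : 0 < √(N : ℝ) := Real.sqrt_pos.2 hN'
  have hss : √(N : ℝ) ^ 2 = N := Real.sq_sqrt hN'.le
  have hs2 : s ^ 2 = 1 := by rw [← sq_abs, hs1, one_pow]
  have h2N : 2 ≤ √(N : ℝ) := by
    rw [Real.le_sqrt (by norm_num) hN'.le]; norm_num; exact_mod_cast hN
  set q : Bool → ℝ := fun b => (1 + sp b * m) / 2 + sp b * τ / √N with hq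
  have hqnn : ∀ b, 0 ≤ q b := by
    intro b
    simp only [hq]
    rw [factor_eq hm0 hm1 hN0]
    have hx := (abs_le.1 ((abs_dev_le hm0 hm1 hN0 hτ b).trans hsm)).1
    refine mul_nonneg ?_ (by linarith)
    rcases sp_cases b with h | h <;> rw [h] <;> linarith
  have e : ∀ σ : Fin N → Bool, prodW m N σ * dens m N τ σ * Real.exp (s * mag m N σ) =
      ∏ i, (q (σ i) * Real.exp (s / √N * (sp (σ i) - m))) := by
    intro σ
    rw [← prod_factor_eq hm0 hm1 hN0, Finset.prod_mul_distrib, ← Real.exp_sum, ← Finset.mul_sum]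
    congr 2; unfold mag; ring
  simp only [e]
  rw [← Fintype.sum_pow (fun b => q b * Real.exp (s / √N * (sp b - m))) N]
  have hnn : 0 ≤ ∑ b : Bool, q b * Real.exp (s / √N * (sp b - m)) :=
    Finset.sum_nonneg fun b _ => mul_nonneg (hqnn b) (Real.exp_pos _).le
  have hone : ∀ b, Real.exp (s / √N * (sp b - m)) ≤ 1 + s / √N * (sp b - m) + 4 / N := by
    intro b
    have hb := abs_sp_sub_le hm0 hm1 b
    have habs : |s / √N * (sp b - m)| ≤ 1 := by
      rw [abs_mul, abs_div, hs1, abs_of_pos hs, div_mul_eq_mul_div, one_mul, div_le_one hs]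
      linarith
    have h := (abs_le.1 (Real.abs_exp_sub_one_sub_id_le habs)).2
    have h' : (s / √N * (sp b - m)) ^ 2 ≤ 4 / N := by
      rw [mul_pow, div_pow, hs2, hss, div_mul_eq_mul_div, one_mul]
      gcongr
      rw [← sq_abs]; nlinarith [abs_nonneg (sp b - m)]
    linarith
  have hle : ∑ b : Bool, q b * Real.exp (s / √N * (sp b - m)) ≤
      Real.exp ((2 * s * τ + 4) / N) := by
    calc _ ≤ ∑ b : Bool, q b * (1 + s / √N * (sp b - m) + 4 / N) :=
          Finset.sum_le_sum fun b _ => mul_le_mul_of_nonneg_left (hone b) (hqnn b)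
      _ = (2 * s * τ + 4) / N + 1 := by
          simp only [Fintype.sum_bool, hq, sp, if_true, Bool.false_eq_true, if_false]
          generalize √(N : ℝ) = r at hs hss ⊢
          rw [← hss]
          field_simp
          ring
      _ ≤ _ := Real.add_one_le_exp _
  refine (pow_le_pow_left₀ hnn hle N).trans (le_of_eq ?_)
  rw [← Real.exp_nat_mul]
  congr 1
  field_simp

lemma sum_prodW_mix_exp {m : ℝ} (hm0 : 0 < m) (hm1 : m < 1) {N : ℕ} (hN : 4 ≤ N) {M : ℝ}
    (hM : 0 ≤ M) (hsm : 4 * M / ((1 - m ^ 2) * √N) ≤ 1 / 2) (γ : Measure ℝ)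
    [IsProbabilityMeasure γ] {s : ℝ} (hs1 : |s| = 1)
    (hγ : Integrable (fun t => Real.exp (2 * s * t)) γ) :
    ∑ σ, prodW m N σ * mix γ m N M σ * Real.exp (s * mag m N σ) ≤
      Real.exp 4 * (1 + ∫ t, Real.exp (2 * s * t) ∂γ) := by
  have hN0 : 0 < N := by omega
  have e : ∀ σ : Fin N → Bool, prodW m N σ * mix γ m N M σ * Real.exp (s * mag m N σ) =
      ∫ t, prodW m N σ * dens m N (tr M t) σ * Real.exp (s * mag m N σ) ∂γ := by
    intro σ
    rw [integral_mul_const, integral_const_mul, mix]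
  simp only [e]
  have hi : ∀ σ ∈ (Finset.univ : Finset (Fin N → Bool)), Integrable
      (fun t => prodW m N σ * dens m N (tr M t) σ * Real.exp (s * mag m N σ)) γ :=
    fun σ _ => ((integrable_dens hm0 hm1 hN0 hM hsm γ σ).const_mul _).mul_const _
  rw [← integral_finsetSum _ hi]
  have hi2 : Integrable (fun t => Real.exp 4 * (1 + Real.exp (2 * s * t))) γ :=
    ((integrable_const _).add hγ).const_mul _
  refine (integral_mono (integrable_finsetSum _ hi) hi2 fun t => ?_).trans (le_of_eq ?_)
  · refine (sum_prodW_dens_exp hm0 hm1 hN (abs_tr_le hM t) hsm hs1).trans ?_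
    rw [add_comm, Real.exp_add]
    refine mul_le_mul_of_nonneg_left ?_ (Real.exp_pos _).le
    unfold tr
    split_ifs
    · linarith
    · simp [(Real.exp_pos _).le]
  · rw [integral_const_mul, integral_add (integrable_const _) hγ]; simp

/-! ### Gaussian mixing -/

lemma integral_exp_quad {c : ℝ} (hc : 0 < c) (b : ℝ) :
    ∫ t : ℝ, Real.exp (b * t - c * t ^ 2) = √(π / c) * Real.exp (b ^ 2 / (4 * c)) := by
  have e : ∀ t : ℝ, Real.exp (b * t - c * t ^ 2) =
      Real.exp (-c * (t - b / (2 * c)) ^ 2) * Real.exp (b ^ 2 / (4 * c)) := by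
    intro t
    rw [← Real.exp_add]
    congr 1
    field_simp
    ring
  simp only [e]
  rw [integral_mul_const, integral_sub_right_eq_self (fun t => Real.exp (-c * t ^ 2)),
    integral_gaussian]

lemma integral_exp_quad_gaussianReal {v : NNReal} (hv : v ≠ 0) {d : ℝ} (hd : 0 ≤ d) (b : ℝ) :
    ∫ t : ℝ, Real.exp (b * t - d * t ^ 2) ∂(ProbabilityTheory.gaussianReal 0 v) =
      (√(2 * π * v))⁻¹ * √(π / (d + 1 / (2 * v))) *
        Real.exp (b ^ 2 / (4 * (d + 1 / (2 * v)))) := by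
  have hv0 : (0 : ℝ) < v := by positivity
  rw [ProbabilityTheory.integral_gaussianReal_eq_integral_smul hv, mul_assoc,
    ← integral_exp_quad (by positivity), ← integral_const_mul]
  congr 1
  funext t
  rw [ProbabilityTheory.gaussianPDFReal_def, smul_eq_mul, mul_assoc, ← Real.exp_add]
  congr 2
  field_simp
  ring

/-- For `|W| ≤ M`, truncating the mixing variable changes the quadratic-exponential integral by at
most `O(exp (-M))`: beyond `M` both integrands lie in `[0, 1]`. -/
lemma truncation_error {a : ℝ} (ha : 0 < a) {W M : ℝ} (hM : 0 ≤ M) (hW : |W| ≤ M) (γ : Measure ℝ)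
    [IsProbabilityMeasure γ] (hγ : ∀ s : ℝ, Integrable (fun t => Real.exp (s * t)) γ) :
    Integrable (fun t => Real.exp (2 * W * tr M t / a - 2 * tr M t ^ 2 / a)) γ ∧
    |∫ t, Real.exp (2 * W * tr M t / a - 2 * tr M t ^ 2 / a) ∂γ -
        ∫ t, Real.exp (2 * W * t / a - 2 * t ^ 2 / a) ∂γ| ≤
      Real.exp (-M) * ∫ t, (Real.exp (1 * t) + Real.exp (-1 * t)) ∂γ := by
  have hi1 : Integrable (fun t => Real.exp (2 * W * tr M t / a - 2 * tr M t ^ 2 / a)) γ := by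
    have hmeas := measurable_tr M
    refine Integrable.of_bound (by fun_prop) (Real.exp (2 * M * M / a)) (ae_of_all _ fun t => ?_)
    rw [Real.norm_eq_abs, abs_of_pos (Real.exp_pos _), Real.exp_le_exp]
    have h1 : W * tr M t ≤ M * M := by
      calc W * tr M t ≤ |W * tr M t| := le_abs_self _
        _ = |W| * |tr M t| := abs_mul _ _
        _ ≤ M * M := by gcongr; exact abs_tr_le hM t
    rw [← sub_div]
    gcongr
    nlinarith [sq_nonneg (tr M t)]
  have hi2 : Integrable (fun t => Real.exp (2 * W * t / a - 2 * t ^ 2 / a)) γ := by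
    refine (hγ (2 * W / a)).mono' (by fun_prop) (ae_of_all _ fun t => ?_)
    rw [Real.norm_eq_abs, abs_of_pos (Real.exp_pos _), Real.exp_le_exp]
    have : 0 ≤ 2 * t ^ 2 / a := by positivity
    have e : 2 * W * t / a = 2 * W / a * t := by ring
    linarith
  refine ⟨hi1, ?_⟩
  rw [← integral_sub hi1 hi2, ← integral_const_mul]
  refine abs_integral_le_integral_abs.trans (integral_mono (hi1.sub hi2).abs
    (((hγ 1).add (hγ (-1))).const_mul _) fun t => ?_)
  simp only
  have hr : 0 ≤ Real.exp (-M) * (Real.exp (1 * t) + Real.exp (-1 * t)) := by positivity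
  unfold tr
  split_ifs with ht
  · simpa using hr
  · have ht' : M < |t| := not_le.1 ht
    have hle1 : Real.exp (2 * W * t / a - 2 * t ^ 2 / a) ≤ 1 := by
      rw [Real.exp_le_one_iff, ← sub_div]
      refine div_nonpos_of_nonpos_of_nonneg ?_ ha.le
      have : W * t ≤ t ^ 2 := by
        calc W * t ≤ |W * t| := le_abs_self _
          _ = |W| * |t| := abs_mul _ _
          _ ≤ |t| * |t| := mul_le_mul_of_nonneg_right (hW.trans ht'.le) (abs_nonneg t)
          _ = t ^ 2 := by rw [← sq, sq_abs]
      linarith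
    have hge := Real.exp_pos (2 * W * t / a - 2 * t ^ 2 / a)
    have hone : 1 ≤ Real.exp (-M) * (Real.exp (1 * t) + Real.exp (-1 * t)) := by
      rw [mul_add, ← Real.exp_add, ← Real.exp_add]
      rcases lt_abs.1 ht' with h | h
      · have h1 : 1 ≤ Real.exp (-M + 1 * t) := Real.one_le_exp (by linarith)
        linarith [Real.exp_pos (-M + -1 * t)]
      · have h1 : 1 ≤ Real.exp (-M + -1 * t) := Real.one_le_exp (by linarith)
        linarith [Real.exp_pos (-M + 1 * t)]
    refine le_trans ?_ hone
    simp only [mul_zero, zero_div, ne_eq, OfNat.ofNat_ne_zero, not_false_eq_true, zero_pow,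
      sub_zero, Real.exp_zero]
    rw [abs_le]; constructor <;> linarith

/-- On the typical set the mixture density is `C₁ exp (β W² / 2)` up to a factor close to `1`. -/
lemma log_mix_typical {m β : ℝ} (hβ : 0 < β) (hm0 : 0 < m) (hm1 : m < 1) {N : ℕ} (hN : 0 < N)
    {M : ℝ} (hM : 0 ≤ M) (hsm : 4 * M / ((1 - m ^ 2) * √N) ≤ 1 / 2) (γ : Measure ℝ)
    [IsProbabilityMeasure γ] (hγ : ∀ s : ℝ, Integrable (fun t => Real.exp (s * t)) γ)
    {C₁ : ℝ} (hC₁ : 0 < C₁)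
    (hJ : ∀ W : ℝ, ∫ t, Real.exp (2 * W * t / (1 - m ^ 2) - 2 * t ^ 2 / (1 - m ^ 2)) ∂γ =
      C₁ * Real.exp (β * W ^ 2 / 2))
    {ε κ : ℝ}
    (hε : ε = (4 * m / (1 - m ^ 2) ^ 2 + 128 / (1 - m ^ 2) ^ 3) * (M ^ 3 / √N))
    (hκ : κ = Real.exp (-M) * (∫ t, (Real.exp (1 * t) + Real.exp (-1 * t)) ∂γ) / C₁)
    (hκ2 : κ ≤ 1 / 2) (σ : Fin N → Bool) (hW : |mag m N σ| ≤ M) :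
    |Real.log (mix γ m N M σ) - (Real.log C₁ + β * mag m N σ ^ 2 / 2)| ≤ ε + 2 * κ := by
  have ha : 0 < 1 - m ^ 2 := by nlinarith
  obtain ⟨hI, hIJ⟩ := truncation_error ha hM hW γ hγ
  rw [hJ] at hIJ
  set W := mag m N σ with hWd
  set I := ∫ t, Real.exp (2 * W * tr M t / (1 - m ^ 2) - 2 * tr M t ^ 2 / (1 - m ^ 2)) ∂γ with hId
  set J := C₁ * Real.exp (β * W ^ 2 / 2) with hJd
  have hU : 1 ≤ Real.exp (β * W ^ 2 / 2) := Real.one_le_exp (by positivity)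
  have hJpos : 0 < J := by positivity
  have hκ0 : 0 ≤ κ := by
    rw [hκ]
    exact div_nonneg (mul_nonneg (Real.exp_pos _).le
      (integral_nonneg fun t => by positivity)) hC₁.le
  have hIJ' : |I - J| ≤ κ * J := by
    refine hIJ.trans ?_
    rw [hκ, hJd, div_mul_eq_mul_div, le_div_iff₀ hC₁]
    have hnn : 0 ≤ Real.exp (-M) * ∫ t, (Real.exp (1 * t) + Real.exp (-1 * t)) ∂γ :=
      mul_nonneg (Real.exp_pos _).le (integral_nonneg fun t => by positivity)
    rw [← mul_assoc]
    exact le_mul_of_one_le_right (mul_nonneg hnn hC₁.le) hU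
  have hd := integrable_dens hm0 hm1 hN hM hsm γ σ
  have hexp := fun t => dens_expansion hm0 hm1 hN hM (abs_tr_le hM t) hsm σ hW hε
  have hlow : Real.exp (-ε) * I ≤ mix γ m N M σ := by
    rw [hId, ← integral_const_mul, mix]
    exact integral_mono (hI.const_mul _) hd fun t => (hexp t).1
  have hupp : mix γ m N M σ ≤ Real.exp ε * I := by
    rw [hId, ← integral_const_mul, mix]
    exact integral_mono hd (hI.const_mul _) fun t => (hexp t).2
  have hIJ2 := abs_le.1 hIJ'
  have hIl : (1 - κ) * J ≤ I := by linarith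
  have hIu : I ≤ (1 + κ) * J := by linarith
  have hIpos : 0 < I := lt_of_lt_of_le (mul_pos (by linarith) hJpos) hIl
  have hVpos : 0 < mix γ m N M σ := lt_of_lt_of_le (mul_pos (Real.exp_pos _) hIpos) hlow
  have hlogJ : Real.log J = Real.log C₁ + β * W ^ 2 / 2 := by
    rw [hJd, Real.log_mul hC₁.ne' (Real.exp_pos _).ne', Real.log_exp]
  have l1 := Real.log_le_log (mul_pos (Real.exp_pos _) hIpos) hlow
  have l2 := Real.log_le_log hVpos hupp
  have l3 := Real.log_le_log (mul_pos (by linarith) hJpos) hIl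
  have l4 := Real.log_le_log hIpos hIu
  rw [Real.log_mul (Real.exp_pos _).ne' hIpos.ne', Real.log_exp] at l1 l2
  rw [Real.log_mul (by linarith) hJpos.ne'] at l3 l4
  have l5 := neg_two_mul_le_log hκ0 hκ2
  have l6 := Real.log_le_sub_one_of_pos (show 0 < 1 + κ by linarith)
  rw [← hlogJ, abs_le]
  constructor <;> linarith

/-! ### The bound at finite `N` -/

set_option maxHeartbeats 1000000 in
/-- Explicit bound on both relative entropies; the typical set is `|W| ≤ M`, `ε + 2 κ` is the error of
the log-ratio on it, and `η` bounds the mass of its complement under both measures. -/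
lemma finite_bound {m β h : ℝ} (hβ : 0 < β) (hh : 0 < h) (hm0 : 0 < m) (hm1 : m < 1)
    (hm : m = Real.tanh (β * m + h)) {N : ℕ} (hN : 4 ≤ N)
    {M : ℝ} (hM : 1 ≤ M) (hsm : 4 * M / ((1 - m ^ 2) * √N) ≤ 1 / 2) (γ : Measure ℝ)
    [IsProbabilityMeasure γ] (hγ : ∀ s : ℝ, Integrable (fun t => Real.exp (s * t)) γ)
    {C₁ : ℝ} (hC₁ : 0 < C₁)
    (hJ : ∀ W : ℝ, ∫ t, Real.exp (2 * W * t / (1 - m ^ 2) - 2 * t ^ 2 / (1 - m ^ 2)) ∂γ =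
      C₁ * Real.exp (β * W ^ 2 / 2))
    {ε κ η : ℝ}
    (hε : ε = (4 * m / (1 - m ^ 2) ^ 2 + 128 / (1 - m ^ 2) ^ 3) * (M ^ 3 / √N))
    (hκ : κ = Real.exp (-M) * (∫ t, (Real.exp (1 * t) + Real.exp (-1 * t)) ∂γ) / C₁)
    (hκ2 : κ ≤ 1 / 2)
    (hη : η = (N + 1) * Real.exp (-(h / (2 * m)) * M) + Real.exp (-1 * M) *
      (Real.exp 4 * (1 + ∫ t, Real.exp (2 * 1 * t) ∂γ) +
        Real.exp 4 * (1 + ∫ t, Real.exp (2 * -1 * t) ∂γ)))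
    (hη2 : η ≤ 1 / 2) (p q : (Fin N → Bool) → ℝ) (Z : ℝ)
    (hZ : Z = ∑ σ, prodW m N σ * Real.exp (β * mag m N σ ^ 2 / 2))
    (hp : ∀ σ, p σ = prodW m N σ * Real.exp (β * mag m N σ ^ 2 / 2) / Z)
    (hq : ∀ σ, q σ = prodW m N σ * mix γ m N M σ) :
    |relEnt p q| ≤ 2 * (ε + 2 * κ) + 2 * η + (2 * β + 2) * N * η ∧
      |relEnt q p| ≤ 2 * (ε + 2 * κ) + 2 * η + (2 * β + 2) * N * η := by
  classical
  have hN0 : 0 < N := by omega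
  have hN' : (0 : ℝ) < N := by exact_mod_cast hN0
  have hM0 : 0 ≤ M := by linarith
  have ha : 0 < 1 - m ^ 2 := by nlinarith
  have hθ : 0 < β * m + h := by positivity
  have hP := prodW_pos hm0 hm1 N
  have hV : ∀ σ, 0 < mix γ m N M σ := fun σ =>
    lt_of_lt_of_le (by positivity) (mix_bounds hm0 hm1 hN0 hM0 hsm γ σ).1
  have hrate : (β * m + h) / m = β + h / m := by field_simp
  have hcrit := sum_prodW_exp_sq hm0 hm1 hθ hm hN0
  rw [hrate] at hcrit
  have hZ1 : 1 ≤ Z := by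
    rw [hZ, ← sum_prodW m N]
    exact Finset.sum_le_sum fun σ _ =>
      le_mul_of_one_le_right (hP σ).le (Real.one_le_exp (by positivity))
  have hZ0 : 0 < Z := by linarith
  have hZu : Z ≤ N + 1 := by
    rw [hZ]
    refine le_trans (Finset.sum_le_sum fun σ _ => mul_le_mul_of_nonneg_left ?_ (hP σ).le) hcrit
    rw [Real.exp_le_exp]
    have : 0 ≤ h / m := by positivity
    gcongr
    linarith
  have hlogZ0 : 0 ≤ Real.log Z := Real.log_nonneg hZ1
  have hlogZ1 : Real.log Z ≤ N := by
    refine (Real.log_le_log hZ0 hZu).trans ?_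
    linarith [Real.log_le_sub_one_of_pos (show (0 : ℝ) < N + 1 by positivity)]
  have hp0 : ∀ σ, 0 < p σ := fun σ => by
    rw [hp]; exact div_pos (mul_pos (hP σ) (Real.exp_pos _)) hZ0
  have hq0 : ∀ σ, 0 < q σ := fun σ => by rw [hq]; exact mul_pos (hP σ) (hV σ)
  have hp1 : ∑ σ, p σ = 1 := by
    simp only [hp]
    rw [← Finset.sum_div, ← hZ, div_self hZ0.ne']
  have hq1 : ∑ σ, q σ = 1 := by
    simp only [hq]; exact sum_prodW_mix hm0 hm1 hN0 hM0 hsm γ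
  set T : Finset (Fin N → Bool) := Finset.univ.filter fun σ => |mag m N σ| ≤ M with hT
  have hmemT : ∀ σ, σ ∈ T ↔ |mag m N σ| ≤ M := fun σ => by simp [hT]
  have hmemTc : ∀ σ, σ ∈ Tᶜ → M < |mag m N σ| := fun σ hσ => by
    rw [Finset.mem_compl, hmemT, not_le] at hσ; exact hσ
  have hlog : ∀ σ, Real.log (p σ / q σ) =
      β * mag m N σ ^ 2 / 2 - Real.log Z - Real.log (mix γ m N M σ) := by
    intro σ
    have e : p σ / q σ = Real.exp (β * mag m N σ ^ 2 / 2) / Z / mix γ m N M σ := by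
      rw [hp, hq]
      have h1 := (hP σ).ne'
      have h2 := (hV σ).ne'
      field_simp
    rw [e, Real.log_div (by positivity) (hV σ).ne', Real.log_div (Real.exp_pos _).ne' hZ0.ne',
      Real.log_exp]
  have hinv : ∀ σ, Real.log (q σ / p σ) = - Real.log (p σ / q σ) := by
    intro σ; rw [← Real.log_inv, inv_div]
  have hTlog : ∀ σ ∈ T, |Real.log (p σ / q σ) - (-Real.log Z - Real.log C₁)| ≤ ε + 2 * κ := by
    intro σ hσ
    have := log_mix_typical hβ hm0 hm1 hN0 hM0 hsm γ hγ hC₁ hJ hε hκ hκ2 σ ((hmemT σ).1 hσ)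
    rw [hlog, abs_le]
    rw [abs_le] at this
    constructor <;> linarith
  have hTlog' : ∀ σ ∈ T, |Real.log (q σ / p σ) - (Real.log Z + Real.log C₁)| ≤ ε + 2 * κ := by
    intro σ hσ
    have := hTlog σ hσ
    rw [hinv, ← abs_neg]
    convert this using 2
    ring
  have hKlog : ∀ σ, |Real.log (p σ / q σ)| ≤ (2 * β + 2) * N := by
    intro σ
    have hb := mix_bounds hm0 hm1 hN0 hM0 hsm γ σ
    have l1 := Real.log_le_log (by positivity) hb.1
    have l2 := Real.log_le_log (hV σ) hb.2
    rw [Real.log_pow, one_div, Real.log_inv] at l1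
    rw [Real.log_pow] at l2
    have hlog2 : Real.log 2 ≤ 1 := by
      linarith [Real.log_le_sub_one_of_pos (zero_lt_two' ℝ)]
    have l3 : N * Real.log 2 ≤ N := mul_le_of_le_one_right hN'.le hlog2
    have hmag : mag m N σ ^ 2 ≤ 4 * N := by
      have h1 := abs_mag_le hm0 hm1 hN0 σ
      rw [← sq_abs]
      calc |mag m N σ| ^ 2 ≤ (2 * √(N : ℝ)) ^ 2 := by gcongr
        _ = 4 * (N : ℝ) := by rw [mul_pow, Real.sq_sqrt hN'.le]; norm_num
    have hmag2 : β * mag m N σ ^ 2 / 2 ≤ 2 * β * N := by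
      have := mul_le_mul_of_nonneg_left hmag hβ.le
      linarith
    have hmag0 : 0 ≤ β * mag m N σ ^ 2 / 2 := by positivity
    have : 0 < β * N := by positivity
    have e : (2 * β + 2) * (N : ℝ) = 2 * β * N + 2 * N := by ring
    rw [mul_neg] at l1
    rw [hlog, abs_le, e]
    constructor <;> linarith
  have hKlog' : ∀ σ, |Real.log (q σ / p σ)| ≤ (2 * β + 2) * N := by
    intro σ; rw [hinv, abs_neg]; exact hKlog σ
  have hint : ∀ s : ℝ, 0 ≤ Real.exp 4 * (1 + ∫ t, Real.exp (s * t) ∂γ) := fun s =>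
    mul_nonneg (Real.exp_pos _).le
      (add_nonneg zero_le_one (integral_nonneg fun t => (Real.exp_pos _).le))
  have hηp : ∑ σ ∈ Tᶜ, p σ ≤ η := by
    have h1 : ∑ σ ∈ Tᶜ, p σ ≤ (N + 1) * Real.exp (-(h / (2 * m)) * M) := by
      calc ∑ σ ∈ Tᶜ, p σ ≤ ∑ σ ∈ Tᶜ, prodW m N σ * Real.exp ((β + h / m) * mag m N σ ^ 2 / 2) *
            Real.exp (-(h / (2 * m)) * M) := by
            refine Finset.sum_le_sum fun σ hσ => ?_
            have hlt := hmemTc σ hσ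
            rw [hp]
            refine (div_le_self (mul_pos (hP σ) (Real.exp_pos _)).le hZ1).trans ?_
            rw [mul_assoc, ← Real.exp_add]
            refine mul_le_mul_of_nonneg_left (Real.exp_le_exp.2 ?_) (hP σ).le
            have hsq : M ≤ mag m N σ ^ 2 := by
              rw [← sq_abs]; nlinarith
            have : h / (2 * m) * M ≤ h / (2 * m) * mag m N σ ^ 2 := by gcongr
            have e : (β + h / m) * mag m N σ ^ 2 / 2 =
                β * mag m N σ ^ 2 / 2 + h / (2 * m) * mag m N σ ^ 2 := by field_simp
            linarith
        _ ≤ ∑ σ, prodW m N σ * Real.exp ((β + h / m) * mag m N σ ^ 2 / 2) *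
            Real.exp (-(h / (2 * m)) * M) :=
            Finset.sum_le_sum_of_subset_of_nonneg (Finset.subset_univ _) fun σ _ _ =>
              mul_nonneg (mul_nonneg (hP σ).le (Real.exp_pos _).le) (Real.exp_pos _).le
        _ ≤ _ := by
            rw [← Finset.sum_mul]
            exact mul_le_mul_of_nonneg_right hcrit (Real.exp_pos _).le
    rw [hη]
    refine h1.trans (le_add_of_nonneg_right ?_)
    exact mul_nonneg (Real.exp_pos _).le (add_nonneg (hint _) (hint _))
  have hηq : ∑ σ ∈ Tᶜ, q σ ≤ η := by
    have h1 : ∑ σ ∈ Tᶜ, q σ ≤ Real.exp (-1 * M) *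
        (Real.exp 4 * (1 + ∫ t, Real.exp (2 * 1 * t) ∂γ) +
          Real.exp 4 * (1 + ∫ t, Real.exp (2 * -1 * t) ∂γ)) := by
      calc ∑ σ ∈ Tᶜ, q σ ≤ ∑ σ ∈ Tᶜ, Real.exp (-1 * M) *
            (q σ * Real.exp (1 * mag m N σ) + q σ * Real.exp (-1 * mag m N σ)) := by
            refine Finset.sum_le_sum fun σ hσ => ?_
            have hlt := hmemTc σ hσ
            have hone : 1 ≤ Real.exp (-1 * M) *
                (Real.exp (1 * mag m N σ) + Real.exp (-1 * mag m N σ)) := by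
              rw [mul_add, ← Real.exp_add, ← Real.exp_add]
              rcases lt_abs.1 hlt with h | h
              · have h1 : 1 ≤ Real.exp (-1 * M + 1 * mag m N σ) := Real.one_le_exp (by linarith)
                linarith [Real.exp_pos (-1 * M + -1 * mag m N σ)]
              · have h1 : 1 ≤ Real.exp (-1 * M + -1 * mag m N σ) := Real.one_le_exp (by linarith)
                linarith [Real.exp_pos (-1 * M + 1 * mag m N σ)]
            calc q σ ≤ q σ * (Real.exp (-1 * M) *
                (Real.exp (1 * mag m N σ) + Real.exp (-1 * mag m N σ))) :=
                  le_mul_of_one_le_right (hq0 σ).le hone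
              _ = _ := by ring
        _ ≤ ∑ σ, Real.exp (-1 * M) *
            (q σ * Real.exp (1 * mag m N σ) + q σ * Real.exp (-1 * mag m N σ)) :=
            Finset.sum_le_sum_of_subset_of_nonneg (Finset.subset_univ _) fun σ _ _ => by
              have := (hq0 σ).le
              positivity
        _ ≤ _ := by
            rw [← Finset.mul_sum, Finset.sum_add_distrib]
            refine mul_le_mul_of_nonneg_left (add_le_add ?_ ?_) (Real.exp_pos _).le
            · simp only [hq]
              exact sum_prodW_mix_exp hm0 hm1 hN hM0 hsm γ (by simp) (hγ _)
            · simp only [hq]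
              exact sum_prodW_mix_exp hm0 hm1 hN hM0 hsm γ (by simp) (hγ _)
    rw [hη]
    exact h1.trans (le_add_of_nonneg_left (by positivity))
  have hε0 : 0 ≤ ε + 2 * κ := by
    have h1 : 0 ≤ ε := by rw [hε]; positivity
    have h2 : 0 ≤ κ := by
      rw [hκ]
      exact div_nonneg (mul_nonneg (Real.exp_pos _).le
        (integral_nonneg fun t => by positivity)) hC₁.le
    linarith
  have hK0 : 0 ≤ (2 * β + 2) * N := by positivity
  exact ⟨relEnt_bound p q hp0 hq0 hp1 hq1 T _ _ η _ hTlog hK0 hε0 hKlog hηp hηq hη2,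
    relEnt_bound q p hq0 hp0 hq1 hp1 T _ _ η _ hTlog' hK0 hε0 hKlog' hηq hηp hη2⟩

/-! ### The limit -/

lemma tendsto_cast_rpow {δ : ℝ} (hδ : 0 < δ) : Tendsto (fun N : ℕ => (N : ℝ) ^ δ) atTop atTop :=
  (tendsto_rpow_atTop hδ).comp tendsto_natCast_atTop_atTop

/-- Stretched exponentials beat every power: `N ^ k * exp (-c N ^ δ) → 0`. -/
lemma tendsto_pow_mul_exp {δ c : ℝ} (hδ : 0 < δ) (hc : 0 < c) (k : ℕ) :
    Tendsto (fun N : ℕ => (N : ℝ) ^ k * Real.exp (-c * (N : ℝ) ^ δ)) atTop (nhds 0) := by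
  have h := (tendsto_rpow_mul_exp_neg_mul_atTop_nhds_zero (k / δ) c hc).comp (tendsto_cast_rpow hδ)
  refine h.congr fun N => ?_
  simp only [Function.comp]
  rw [← Real.rpow_mul (Nat.cast_nonneg N), mul_div_cancel₀ _ hδ.ne', Real.rpow_natCast]

/-- `(N ^ δ) ^ j / √N → 0` as soon as `j δ < 1/2`. -/
lemma tendsto_rpow_div_sqrt {δ : ℝ} (j : ℕ) (hj : j * δ < 1 / 2) :
    Tendsto (fun N : ℕ => ((N : ℝ) ^ δ) ^ j / √N) atTop (nhds 0) := by
  have h := (tendsto_rpow_neg_atTop (show 0 < 1 / 2 - j * δ by linarith)).comp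
    (tendsto_natCast_atTop_atTop (R := ℝ))
  refine h.congr' ?_
  filter_upwards [eventually_gt_atTop 0] with N hN
  have hN' : (0 : ℝ) < N := by exact_mod_cast hN
  simp only [Function.comp]
  rw [← Real.rpow_natCast, ← Real.rpow_mul hN'.le, Real.sqrt_eq_rpow, ← Real.rpow_sub hN']
  congr 1; ring

/-- For the Curie–Weiss model with external field `h > 0` and arbitrary
`β > 0`, let `m⁺ ∈ (0,1)` be the largest solution of `z = tanh(βz + h)` and
`r² = β(1−(m⁺)²)²/(4−4β(1−(m⁺)²))`. With `ξ̃ ∼ N(0, r²)` truncated at `N^δ`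
(`0 < δ < 1/6`) and the mixed product measure `ν_N` below, one has
`H(μ_N|ν_N) → 0` and `H(ν_N|μ_N) → 0`. Spins `±1` are encoded by `Bool`. -/
theorem stmt_8
    (β h : ℝ) (hβ : 0 < β) (hh : 0 < h)
    (mp : ℝ) (hmp_mem : mp ∈ Set.Ioo (0 : ℝ) 1)
    (hmp_sol : mp = Real.tanh (β * mp + h))
    (hmp_largest : ∀ z : ℝ, z = Real.tanh (β * z + h) → z ≤ mp)
    (r2 : ℝ) (hr2 : r2 = β * (1 - mp ^ 2) ^ 2 / (4 - 4 * β * (1 - mp ^ 2)))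
    (δ : ℝ) (hδ0 : 0 < δ) (hδ : δ < 1 / 6)
    (spin : Bool → ℝ) (hspin : ∀ b, spin b = if b then 1 else -1)
    (Z : ℕ → ℝ)
    (hZ : ∀ N : ℕ, Z N = ∑ σ : Fin N → Bool,
      Real.exp (β / (2 * N) * (∑ i, ∑ j, spin (σ i) * spin (σ j)) + h * ∑ i, spin (σ i)))
    (μ : ∀ N : ℕ, (Fin N → Bool) → ℝ)
    (hμ : ∀ N σ, μ N σ =
      Real.exp (β / (2 * N) * (∑ i, ∑ j, spin (σ i) * spin (σ j)) + h * ∑ i, spin (σ i)) / Z N)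
    (gauss : ℝ → ℝ)
    (hgauss : ∀ t, gauss t = Real.exp (-t ^ 2 / (2 * r2)) / Real.sqrt (2 * Real.pi * r2))
    (ν : ∀ N : ℕ, (Fin N → Bool) → ℝ)
    (hν : ∀ N σ, ν N σ =
      ∫ t : ℝ, (∏ i, ((1 + spin (σ i) * mp) / 2 +
          spin (σ i) * (if |t| ≤ (N : ℝ) ^ δ then t else 0) / Real.sqrt N)) * gauss t) :
    Tendsto (fun N => relEnt (μ N) (ν N)) atTop (nhds 0) ∧
      Tendsto (fun N => relEnt (ν N) (μ N)) atTop (nhds 0) := by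
  obtain ⟨hm0, hm1⟩ := hmp_mem
  obtain rfl : spin = sp := by funext b; rw [hspin]; rfl
  have ha : 0 < 1 - mp ^ 2 := by nlinarith
  have hslope := slope_lt_one hh hm0 hm1 hβ hmp_sol
  have hden : 0 < 4 - 4 * β * (1 - mp ^ 2) := by linarith
  have hr0 : 0 < r2 := by rw [hr2]; positivity
  set v : NNReal := ⟨r2, hr0.le⟩ with hv
  have hvr : (v : ℝ) = r2 := rfl
  have hv0 : v ≠ 0 := by
    intro h0
    have : (v : ℝ) = 0 := by rw [h0]; rfl
    linarith
  set γ := ProbabilityTheory.gaussianReal 0 v with hγd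
  have hγ : ∀ s : ℝ, Integrable (fun t => Real.exp (s * t)) γ := fun s =>
    ProbabilityTheory.integrable_exp_mul_gaussianReal s
  set C₁ : ℝ := (√(2 * π * v))⁻¹ * √(π / (2 / (1 - mp ^ 2) + 1 / (2 * v))) with hC₁d
  have hC₁ : 0 < C₁ := by
    rw [hC₁d, hvr]; positivity
  -- The variance `r2` is exactly the one for which the Gaussian tilt produces `exp (β W² / 2)`.
  have hJ : ∀ W : ℝ, ∫ t, Real.exp (2 * W * t / (1 - mp ^ 2) - 2 * t ^ 2 / (1 - mp ^ 2)) ∂γ =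
      C₁ * Real.exp (β * W ^ 2 / 2) := by
    intro W
    have h1 := integral_exp_quad_gaussianReal hv0 (d := 2 / (1 - mp ^ 2)) (by positivity)
      (2 * W / (1 - mp ^ 2))
    have e1 : ∀ t : ℝ, 2 * W * t / (1 - mp ^ 2) - 2 * t ^ 2 / (1 - mp ^ 2) =
        2 * W / (1 - mp ^ 2) * t - 2 / (1 - mp ^ 2) * t ^ 2 := by intro t; ring
    have e2 : (2 * W / (1 - mp ^ 2)) ^ 2 / (4 * (2 / (1 - mp ^ 2) + 1 / (2 * (v : ℝ)))) =
        β * W ^ 2 / 2 := by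
      rw [hvr, hr2]
      generalize 1 - mp ^ 2 = a at ha hden
      have h2 : 2 / a + 1 / (2 * (β * a ^ 2 / (4 - 4 * β * a))) = 2 / (β * a ^ 2) := by
        field_simp
        ring
      rw [h2]
      field_simp
      ring
    simp only [e1]
    rw [h1, e2]
  have hνeq : ∀ N : ℕ, 0 < N → ∀ σ, ν N σ = prodW mp N σ * mix γ mp N ((N : ℝ) ^ δ) σ := by
    intro N hN σ
    rw [hν, mix, ← integral_const_mul, hγd,
      ProbabilityTheory.integral_gaussianReal_eq_integral_smul hv0]
    congr 1
    funext t
    rw [← prod_factor_eq hm0 hm1 hN, hgauss, ProbabilityTheory.gaussianPDFReal_def, smul_eq_mul,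
      hvr]
    simp only [sub_zero]
    rw [mul_comm, div_eq_inv_mul]
    rfl
  set D : ℝ := 4 * mp / (1 - mp ^ 2) ^ 2 + 128 / (1 - mp ^ 2) ^ 3 with hD
  set ε : ℕ → ℝ := fun N => D * (((N : ℝ) ^ δ) ^ 3 / √N) with hεd
  set A : ℝ := ∫ t, (Real.exp (1 * t) + Real.exp (-1 * t)) ∂γ with hA
  set κ : ℕ → ℝ := fun N => Real.exp (-(N : ℝ) ^ δ) * A / C₁ with hκd
  set B : ℝ := Real.exp 4 * (1 + ∫ t, Real.exp (2 * 1 * t) ∂γ) +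
    Real.exp 4 * (1 + ∫ t, Real.exp (2 * -1 * t) ∂γ) with hB
  set η : ℕ → ℝ := fun N => (N + 1) * Real.exp (-(h / (2 * mp)) * (N : ℝ) ^ δ) +
    Real.exp (-1 * (N : ℝ) ^ δ) * B with hηd
  have hc : 0 < h / (2 * mp) := by positivity
  have hε : Tendsto ε atTop (nhds 0) := by
    have := (tendsto_rpow_div_sqrt (δ := δ) 3 (by push_cast; linarith)).const_mul D
    simpa using this
  have hκ : Tendsto κ atTop (nhds 0) := by
    have := ((tendsto_pow_mul_exp hδ0 one_pos 0).mul_const A).div_const C₁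
    simpa [hκd] using this
  have hη : Tendsto η atTop (nhds 0) := by
    have h1 := ((tendsto_pow_mul_exp hδ0 hc 1).add (tendsto_pow_mul_exp hδ0 hc 0)).add
      ((tendsto_pow_mul_exp hδ0 one_pos 0).mul_const B)
    simp only [zero_mul, add_zero] at h1
    refine h1.congr fun N => ?_
    simp only [hηd]; ring
  have hNη : Tendsto (fun N : ℕ => (N : ℝ) * η N) atTop (nhds 0) := by
    have h1 := ((tendsto_pow_mul_exp hδ0 hc 2).add (tendsto_pow_mul_exp hδ0 hc 1)).add
      ((tendsto_pow_mul_exp hδ0 one_pos 1).mul_const B)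
    simp only [zero_mul, add_zero] at h1
    refine h1.congr fun N => ?_
    simp only [hηd]; ring
  have hsm : Tendsto (fun N : ℕ => 4 * (N : ℝ) ^ δ / ((1 - mp ^ 2) * √N)) atTop (nhds 0) := by
    have := (tendsto_rpow_div_sqrt (δ := δ) 1 (by push_cast; linarith)).const_mul (4 / (1 - mp ^ 2))
    rw [mul_zero] at this
    refine this.congr fun N => ?_
    rw [pow_one, div_mul_div_comm]
  have hbound : Tendsto (fun N : ℕ => 2 * (ε N + 2 * κ N) + 2 * η N + (2 * β + 2) * N * η N)
      atTop (nhds 0) := by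
    have := (((hε.add (hκ.const_mul 2)).const_mul 2).add (hη.const_mul 2)).add
      (hNη.const_mul (2 * β + 2))
    simp only [mul_zero, add_zero] at this
    refine this.congr fun N => ?_
    ring
  have half : (0 : ℝ) < 1 / 2 := by norm_num
  have hmain : ∀ᶠ N : ℕ in atTop,
      |relEnt (μ N) (ν N)| ≤ 2 * (ε N + 2 * κ N) + 2 * η N + (2 * β + 2) * N * η N ∧
      |relEnt (ν N) (μ N)| ≤ 2 * (ε N + 2 * κ N) + 2 * η N + (2 * β + 2) * N * η N := by
    filter_upwards [eventually_ge_atTop 4, hsm.eventually (eventually_le_nhds half),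
      hκ.eventually (eventually_le_nhds half), hη.eventually (eventually_le_nhds half)]
      with N hN hsmN hκN hηN
    have hN0 : 0 < N := by omega
    have hM : (1 : ℝ) ≤ (N : ℝ) ^ δ :=
      Real.one_le_rpow (by exact_mod_cast hN0) hδ0.le
    refine finite_bound hβ hh hm0 hm1 hmp_sol hN hM hsmN γ hγ hC₁ hJ rfl rfl hκN rfl hηN
      (μ N) (ν N) _ rfl (fun σ => ?_) (hνeq N hN0)
    have hKpos : 0 < (2 * Real.cosh (β * mp + h)) ^ N * Real.exp (-(β * N * mp ^ 2 / 2)) := by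
      have := Real.cosh_pos (β * mp + h)
      positivity
    rw [hμ, hZ]
    simp only [boltzmann_eq hmp_sol hN0]
    rw [← Finset.mul_sum, mul_div_mul_left _ _ hKpos.ne']
  exact ⟨squeeze_zero_norm' (hmain.mono fun N hN => hN.1) hbound,
    squeeze_zero_norm' (hmain.mono fun N hN => hN.2) hbound⟩
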